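/- Let g be a finite-dimensional real unimodular Lie algebra with a meta-abelian decomposition g = m ⊕ n and an LCK structure (J, ⟨·,·⟩, θ) such that θ ≠ 0, θ vanishes on n, and n + J(n) = g. Set a = n ∩ J(n), let k be the orthogonal complement of a in n with respect to ⟨·,·⟩, and write 2t = dim a. Then for every u ∈ m, the trace of the linear operator k → k, x ↦ [u, x], equals t·θ(u). -/

import Mathlib

/-!
Let `ω = ⟨J·, ·⟩`. As `n` is abelian and killed by `θ`, the identity `dω = θ ∧ ω` evaluated at
`(u, x, y)` with `x, y ∈ n` says that `ad u` rescales `ω` infinitesimally on `n` by `-θ(u)`.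
The `J`-invariant subspace `a` is `ω`-nondegenerate and `k` is its `ω`-orthogonal in `n`, so the
compression of `ad u` to `a` along `k` rescales `ω|ₐ` by the same factor; an operator rescaling a
nondegenerate form by `c` has trace `c · dim / 2`, whence `tr (ad u|ₙ) = tr (ad u|ₖ) - t θ(u)`.
For `u ∈ m` the image of `ad u` lies in `n`, so `tr (ad u|ₙ) = tr (ad u) = 0` by unimodularity.
-/

open Module
open LinearMap (trace BilinForm IsAdjointPair IsPerfPair)

section PerfectForm

variable {R M : Type*} [CommRing R] [AddCommGroup M] [Module R M] {ω : BilinForm R M}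

theorem trace_eq_trace_of_isAdjointPair [Free R M] [Module.Finite R M] [IsPerfPair ω]
    {f g : M →ₗ[R] M} (hfg : IsAdjointPair ω ω f g) : trace R M f = trace R M g := by
  have conj_eq_transpose : ω.toPerfPair.conj f = Dual.transpose (R := R) g := by
    ext φ y
    obtain ⟨x, rfl⟩ := ω.toPerfPair.surjective φ
    rw [LinearEquiv.conj_apply_apply, LinearEquiv.symm_apply_apply]
    exact hfg x y
  rw [← LinearMap.trace_conj' f ω.toPerfPair, conj_eq_transpose, LinearMap.trace_transpose']

theorem two_mul_trace_eq_of_apply_add_apply_eq_mul [Free R M] [Module.Finite R M] [IsPerfPair ω]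
    {f : M →ₗ[R] M} {c : R} (hf : ∀ x y, ω (f x) y + ω x (f y) = c * ω x y) :
    2 * trace R M f = c * finrank R M := by
  have adjoint : IsAdjointPair ω ω f (c • LinearMap.id - f : M →ₗ[R] M) := fun x y ↦ by
    rw [LinearMap.sub_apply, map_sub, LinearMap.smul_apply, map_smul, smul_eq_mul,
      LinearMap.id_apply, ← hf, add_sub_cancel_right]
  have trace_eq := trace_eq_trace_of_isAdjointPair adjoint
  rw [map_sub, map_smul, LinearMap.trace_id, smul_eq_mul] at trace_eq
  linear_combination trace_eq

theorem exists_projection_ker_eq_orthogonal (hω : ω.IsRefl) (W : Submodule R M)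
    [IsPerfPair (ω.restrict W)] :
    ∃ q : M →ₗ[R] W, (∀ w : W, q w = w) ∧ q.ker = ω.orthogonal W := by
  let e : W ≃ₗ[R] Dual R W := (ω.restrict W).toPerfPair
  let restrictDual : M →ₗ[R] Dual R W := Dual.transpose (R := R) W.subtype ∘ₗ ω
  refine ⟨e.symm ∘ₗ restrictDual, fun w ↦ e.symm_apply_apply w, ?_⟩
  ext x
  rw [LinearEquiv.ker_comp, LinearMap.mem_ker, LinearMap.ext_iff, Subtype.forall]
  exact forall₂_congr fun w _ ↦ hω.eq_iff

end PerfectForm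

section Trace

variable {K V : Type*} [Field K] [AddCommGroup V] [Module K V] {n W : Submodule K V}
  [FiniteDimensional K n]

theorem trace_restrict_eq_trace_restrict_inf_ker_add (hWn : W ≤ n) {q : V →ₗ[K] W}
    (hq : ∀ w : W, q w = w) {f : V →ₗ[K] V}
    (hn : ∀ x ∈ n, f x ∈ n) (hk : ∀ x ∈ n ⊓ q.ker, f x ∈ n ⊓ q.ker) :
    trace K n (f.restrict hn) =
      trace K ↥(n ⊓ q.ker) (f.restrict hk) + trace K W (q ∘ₗ f ∘ₗ W.subtype) := by
  have : FiniteDimensional K W := Submodule.finiteDimensional_of_le hWn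
  let fn : n →ₗ[K] n := f.restrict hn
  let i : ↥(n ⊓ q.ker) →ₗ[K] n := Submodule.inclusion inf_le_left
  let j : W →ₗ[K] n := Submodule.inclusion hWn
  let r : n →ₗ[K] W := q ∘ₗ n.subtype
  let p : n →ₗ[K] ↥(n ⊓ q.ker) :=
    (n.subtype - W.subtype ∘ₗ r).codRestrict _ fun x ↦
      ⟨n.sub_mem x.2 (hWn (r x).2), by simp [r, hq]⟩
  have coe_p (x : n) : (p x : V) = x - q x := rfl
  have decomp : i ∘ₗ p + j ∘ₗ r = LinearMap.id := by
    ext x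
    simp [i, j, r, coe_p]
  have compression_ker : p ∘ₗ fn ∘ₗ i = f.restrict hk := by
    ext x
    have : q (f x) = 0 := (hk x x.2).2
    simp [fn, i, coe_p, this]
  calc trace K n fn
      = trace K n ((fn ∘ₗ i) ∘ₗ p) + trace K n ((fn ∘ₗ j) ∘ₗ r) := by
        rw [← map_add, LinearMap.comp_assoc, LinearMap.comp_assoc, ← LinearMap.comp_add, decomp,
          LinearMap.comp_id]
    _ = trace K ↥(n ⊓ q.ker) (p ∘ₗ fn ∘ₗ i) + trace K W (r ∘ₗ fn ∘ₗ j) := by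
        rw [LinearMap.trace_comp_comm' p, LinearMap.trace_comp_comm' r]
    _ = trace K ↥(n ⊓ q.ker) (f.restrict hk) + trace K W (q ∘ₗ f ∘ₗ W.subtype) := by
        rw [compression_ker]
        rfl

theorem two_mul_trace_restrict_eq_add_of_apply_add_apply_eq_mul {ω : BilinForm K V}
    (hω : ω.IsRefl) (hWn : W ≤ n) [IsPerfPair (ω.restrict W)] {f : V →ₗ[K] V} {c : K}
    (hf : ∀ x ∈ W, ∀ y ∈ W, ω (f x) y + ω x (f y) = c * ω x y) (hn : ∀ x ∈ n, f x ∈ n)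
    (hk : ∀ x ∈ n ⊓ ω.orthogonal W, f x ∈ n ⊓ ω.orthogonal W) :
    2 * trace K n (f.restrict hn) =
      2 * trace K ↥(n ⊓ ω.orthogonal W) (f.restrict hk) + c * finrank K W := by
  have : FiniteDimensional K W := Submodule.finiteDimensional_of_le hWn
  obtain ⟨q, hq, hker⟩ := exists_projection_ker_eq_orthogonal hω W
  have sub_mem (x : V) : x - q x ∈ ω.orthogonal W := by
    rw [← hker, LinearMap.mem_ker, map_sub, hq, sub_self]
  have compression_left (x : V) (w : W) : ω (q x) w = ω x w := by
    have : ω (x - q x) w = 0 := hω _ _ (sub_mem x w w.2)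
    rwa [map_sub, LinearMap.sub_apply, sub_eq_zero, eq_comm] at this
  have compression_right (x : V) (w : W) : ω w (q x) = ω w x := by
    have : ω w (x - q x) = 0 := sub_mem x w w.2
    rwa [map_sub, sub_eq_zero, eq_comm] at this
  have trace_compression : 2 * trace K W (q ∘ₗ f ∘ₗ W.subtype) = c * finrank K W :=
    two_mul_trace_eq_of_apply_add_apply_eq_mul (ω := ω.restrict W) fun x y ↦ by
      simpa [compression_left, compression_right] using hf x x.2 y y.2
  revert hk
  rw [← hker]
  intro hk
  rw [trace_restrict_eq_trace_restrict_inf_ker_add hWn hq hn hk, mul_add, trace_compression]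

end Trace

section FundamentalForm

variable {R V : Type*} [CommRing R] [AddCommGroup V] [Module R V]

/-- The fundamental 2-form `ω(x, y) = ⟨Jx, y⟩` of a metric `B = ⟨·, ·⟩` and an almost complex
structure `J`. -/
def fundamentalForm (B : BilinForm R V) (J : V →ₗ[R] V) : BilinForm R V := B.compLeft J

variable {B : BilinForm R V} {J : V →ₗ[R] V}

theorem fundamentalForm_apply (x y : V) : fundamentalForm B J x y = B (J x) y := rfl

theorem fundamentalForm_skew (hBsymm : ∀ x y, B x y = B y x) (hJ2 : ∀ x, J (J x) = -x)
    (hJB : ∀ x y, B (J x) (J y) = B x y) (x y : V) :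
    fundamentalForm B J x y = -fundamentalForm B J y x := by
  rw [fundamentalForm_apply, fundamentalForm_apply, ← hJB, hJ2, map_neg, LinearMap.neg_apply,
    hBsymm]

theorem fundamentalForm_isRefl (hBsymm : ∀ x y, B x y = B y x) (hJ2 : ∀ x, J (J x) = -x)
    (hJB : ∀ x y, B (J x) (J y) = B x y) : (fundamentalForm B J).IsRefl := fun x y hxy ↦ by
  rw [fundamentalForm_skew hBsymm hJ2 hJB, hxy, neg_zero]

theorem apply_mem_inf_map_of_mem (hJ2 : ∀ x, J (J x) = -x) {n : Submodule R V} :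
    ∀ x ∈ n ⊓ n.map J, J x ∈ n ⊓ n.map J := by
  rintro _ ⟨hx, y, hy, rfl⟩
  exact ⟨hJ2 y ▸ n.neg_mem hy, Submodule.mem_map_of_mem hx⟩

theorem forall_mem_comp_eq_zero_iff (hJ2 : ∀ x, J (J x) = -x) {W : Submodule R V}
    (hW : ∀ x ∈ W, J x ∈ W) {φ : Dual R V} : (∀ y ∈ W, φ (J y) = 0) ↔ ∀ y ∈ W, φ y = 0 := by
  refine ⟨fun h y hy ↦ ?_, fun h y hy ↦ h _ (hW y hy)⟩
  simpa [hJ2] using h _ (hW y hy)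

theorem mem_orthogonal_fundamentalForm_iff (hBsymm : ∀ x y, B x y = B y x)
    (hJ2 : ∀ x, J (J x) = -x) {W : Submodule R V} (hW : ∀ x ∈ W, J x ∈ W) {v : V} :
    v ∈ (fundamentalForm B J).orthogonal W ↔ ∀ y ∈ W, B v y = 0 := by
  rw [← forall_mem_comp_eq_zero_iff hJ2 hW]
  exact forall₂_congr fun y _ ↦ by rw [hBsymm]; rfl

theorem isPerfPair_restrict_fundamentalForm {K V : Type*} [Field K] [AddCommGroup V]
    [Module K V] {B : BilinForm K V} {J : V →ₗ[K] V} (hBsymm : ∀ x y, B x y = B y x)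
    (hJ2 : ∀ x, J (J x) = -x) (hJB : ∀ x y, B (J x) (J y) = B x y)
    {W : Submodule K V} [FiniteDimensional K W] (hW : ∀ x ∈ W, J x ∈ W)
    (hBW : ∀ x ∈ W, (∀ y ∈ W, B x y = 0) → x = 0) :
    IsPerfPair ((fundamentalForm B J).restrict W) := by
  have separatingLeft : ((fundamentalForm B J).restrict W).SeparatingLeft := fun x hx ↦ by
    have Jx_eq_zero : J x = 0 := hBW (J x) (hW x x.2) fun y hy ↦ hx ⟨y, hy⟩
    rw [← Submodule.coe_eq_zero, ← neg_eq_zero, ← hJ2, Jx_eq_zero, map_zero]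
  have nondegenerate : ((fundamentalForm B J).restrict W).Nondegenerate :=
    (LinearMap.IsRefl.domRestrict (fundamentalForm_isRefl hBsymm hJ2 hJB)
      W).nondegenerate_iff_separatingLeft.2 separatingLeft
  exact .of_injective
    (LinearMap.ker_eq_bot.1 <| LinearMap.separatingLeft_iff_ker_eq_bot.1 nondegenerate.1)
    (LinearMap.ker_eq_bot.1 <| LinearMap.separatingRight_iff_flip_ker_eq_bot.1 nondegenerate.2)

end FundamentalForm

section LieAlgebra

variable {R g : Type*} [CommRing R] [LieRing g] [LieAlgebra R g]

/-- The equation `dω = θ ∧ ω` for left-invariant forms on a Lie algebra, where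
`dω(x, y, z) = -ω([x, y], z) - ω([y, z], x) - ω([z, x], y)`. -/
def IsConformallyClosed (ω : BilinForm R g) (θ : Dual R g) : Prop :=
  ∀ x y z : g, -ω ⁅x, y⁆ z - ω ⁅y, z⁆ x - ω ⁅z, x⁆ y = θ x * ω y z + θ y * ω z x + θ z * ω x y

theorem IsConformallyClosed.lie_apply_add_apply_lie {ω : BilinForm R g} {θ : Dual R g}
    (hω : IsConformallyClosed ω θ) (hskew : ∀ x y, ω x y = -ω y x) {x y : g}
    (hxy : ⁅x, y⁆ = 0) (hx : θ x = 0) (hy : θ y = 0) (u : g) :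
    ω ⁅u, x⁆ y + ω x ⁅u, y⁆ = -θ u * ω x y := by
  have closed := hω u x y
  rw [hxy, hx, hy, ← lie_skew y u, map_neg, LinearMap.neg_apply, hskew ⁅u, y⁆ x] at closed
  simp only [map_zero, LinearMap.zero_apply] at closed
  linear_combination -closed

theorem lie_mem_of_codisjoint {m n : Submodule R g} (hmn : Codisjoint m n)
    {u : g} (hm : ∀ x ∈ m, ⁅u, x⁆ ∈ n) (hn : ∀ x ∈ n, ⁅u, x⁆ ∈ n) (x : g) : ⁅u, x⁆ ∈ n := by
  obtain ⟨p, q, hp, hq, rfl⟩ := Submodule.codisjoint_iff_exists_add_eq.1 hmn x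
  exact lie_add u p q ▸ n.add_mem (hm p hp) (hn q hq)

theorem lck_trace_ad_on_k_general {K g : Type*} [Field K] [NeZero (2 : K)]
    [LieRing g] [LieAlgebra K g]
    {B : BilinForm K g} {J : g →ₗ[K] g} {θ : Dual K g}
    (hBsymm : ∀ x y : g, B x y = B y x)
    (hJ2 : ∀ x : g, J (J x) = -x)
    (hJB : ∀ x y : g, B (J x) (J y) = B x y)
    (hLCK : IsConformallyClosed (fundamentalForm B J) θ)
    {n : Submodule K g} [FiniteDimensional K n]
    (hBa : ∀ x ∈ n ⊓ n.map J, (∀ y ∈ n ⊓ n.map J, B x y = 0) → x = 0)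
    (hnab : ∀ x ∈ n, ∀ y ∈ n, ⁅x, y⁆ = (0 : g))
    (hθn : ∀ x ∈ n, θ x = 0)
    {k : Submodule K g}
    (hk : ∀ v : g, v ∈ k ↔ v ∈ n ∧ ∀ y ∈ n ⊓ n.map J, B v y = 0)
    {t : ℕ} (ht : finrank K ↥(n ⊓ n.map J) = 2 * t)
    {u : g} (hun : ∀ x ∈ n, LieAlgebra.ad K g u x ∈ n) (huk : ∀ x ∈ k, LieAlgebra.ad K g u x ∈ k) :
    trace K k ((LieAlgebra.ad K g u).restrict huk) =
      trace K n ((LieAlgebra.ad K g u).restrict hun) + t * θ u := by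
  have skew := fundamentalForm_skew hBsymm hJ2 hJB
  have a_invariant := apply_mem_inf_map_of_mem hJ2 (n := n)
  have := isPerfPair_restrict_fundamentalForm hBsymm hJ2 hJB a_invariant hBa
  obtain rfl : k = n ⊓ (fundamentalForm B J).orthogonal (n ⊓ n.map J) := by
    ext v
    rw [hk, Submodule.mem_inf, mem_orthogonal_fundamentalForm_iff hBsymm hJ2 a_invariant]
  have conformal (x : g) (hx : x ∈ n ⊓ n.map J) (y : g) (hy : y ∈ n ⊓ n.map J) :=
    hLCK.lie_apply_add_apply_lie skew (hnab x hx.1 y hy.1) (hθn x hx.1) (hθn y hy.1) u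
  have two_mul_trace := two_mul_trace_restrict_eq_add_of_apply_add_apply_eq_mul
    (fundamentalForm_isRefl hBsymm hJ2 hJB) inf_le_left conformal hun huk
  rw [ht, Nat.cast_mul, Nat.cast_two] at two_mul_trace
  refine mul_left_cancel₀ (two_ne_zero (α := K)) ?_
  linear_combination -two_mul_trace

end LieAlgebra

/-- For a non-Vaisman LCK structure on a unimodular meta-abelian Lie algebra
`g = m ⊕ n` with `n + J(n) = g`, writing `2t = dim a` with `a = n ∩ J(n)` and `k`
the orthogonal complement of `a` in `n`, the trace of `x ↦ ⁅u, x⁆` on `k` equals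
`t·θ(u)` for every `u ∈ m`. -/
theorem lck_trace_ad_on_k
    (g : Type*) [LieRing g] [LieAlgebra ℝ g] [FiniteDimensional ℝ g]
    (B : g →ₗ[ℝ] g →ₗ[ℝ] ℝ) (J : g →ₗ[ℝ] g) (θ : g →ₗ[ℝ] ℝ)
    (hBsymm : ∀ x y : g, B x y = B y x)
    (hBpos : ∀ x : g, x ≠ 0 → 0 < B x x)
    (hJ2 : ∀ x : g, J (J x) = -x)
    (hJB : ∀ x y : g, B (J x) (J y) = B x y)
    (hJint : ∀ x y : g, ⁅x, y⁆ - ⁅J x, J y⁆ + J ⁅x, J y⁆ + J ⁅J x, y⁆ = 0)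
    (hθbr : ∀ x y : g, θ ⁅x, y⁆ = 0)
    (hLCK : ∀ x y z : g,
      -(B (J ⁅x, y⁆) z) - B (J ⁅y, z⁆) x - B (J ⁅z, x⁆) y =
        θ x * B (J y) z + θ y * B (J z) x + θ z * B (J x) y)
    (m n : Submodule ℝ g)
    (hcompl : IsCompl m n)
    (hnab : ∀ x ∈ n, ∀ y ∈ n, ⁅x, y⁆ = (0 : g))
    (hnideal : ∀ x : g, ∀ y ∈ n, ⁅x, y⁆ ∈ n)
    (hmab : ∀ x ∈ m, ∀ y ∈ m, ⁅x, y⁆ = (0 : g))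
    (hunimod : ∀ x : g, LinearMap.trace ℝ g (LieAlgebra.ad ℝ g x) = 0)
    (hθ0 : θ ≠ 0)
    (hθn : ∀ x ∈ n, θ x = 0)
    (hspan : n ⊔ Submodule.map J n = ⊤)
    (k : Submodule ℝ g)
    (hk : ∀ v : g, v ∈ k ↔ v ∈ n ∧ ∀ y ∈ n ⊓ Submodule.map J n, B v y = 0)
    (t : ℕ)
    (ht : Module.finrank ℝ ↥(n ⊓ Submodule.map J n) = 2 * t) :
    ∀ u ∈ m, ∀ (h : ∀ x ∈ k, (LieAlgebra.ad ℝ g u) x ∈ k),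
      LinearMap.trace ℝ k ((LieAlgebra.ad ℝ g u).restrict h) = (t : ℝ) * θ u := by
  intro u hu h
  have hun : ∀ x, LieAlgebra.ad ℝ g u x ∈ n :=
    lie_mem_of_codisjoint hcompl.codisjoint (fun x hx ↦ hmab u hu x hx ▸ n.zero_mem) (hnideal u)
  rw [lck_trace_ad_on_k_general hBsymm hJ2 hJB hLCK
      (fun x hx hxa ↦ by_contra fun hne ↦ (hBpos x hne).ne' (hxa x hx)) hnab hθn hk ht
      (fun x _ ↦ hun x), LinearMap.trace_restrict_eq_of_forall_mem n _ hun, hunimod, zero_add]
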